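/- Define f : ℝ → ℝ by f(θ) = ln( 1 + √(2 − 2cos θ) + √(2 − 2cos θ + 2√(2 − 2cos θ)) ). Then f is twice differentiable at θ = π and f''(π) = −√2/8. -/

import Mathlib

/-!
For `0 < θ < 2π` the half-angle formula gives `√(2 - 2 cos θ) = s` with `s = 2 sin (θ / 2) > 0`, so
`f(θ) = log (1 + s + √(s² + 2 s)) = arcosh (1 + s)`. As `d/ds arcosh (1 + s) = 1 / √(s² + 2 s)`,
this yields `f'(θ) = cos (θ / 2) / √(s² + 2 s)` on the whole interval. At `θ = π` the numerator
vanishes and `s = 2`, so only the derivative of the numerator contributes to `f''(π)`: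
`f''(π) = -(1 / 2) / √8 = -√2 / 8`.
-/

/-- `f(θ) = ln|ζ(e^{iθ})| = ln(1 + √(2-2cos θ) + √(2-2cos θ + 2√(2-2cos θ)))`. -/
noncomputable def logAbsZeta (θ : ℝ) : ℝ :=
  Real.log (1 + Real.sqrt (2 - 2 * Real.cos θ) +
    Real.sqrt (2 - 2 * Real.cos θ + 2 * Real.sqrt (2 - 2 * Real.cos θ)))

/-- The derivative of `s ↦ arcosh (1 + s)` for `s > 0`, in logarithmic form. -/
lemma hasDerivAt_log_add_sqrt {s : ℝ} (hs : 0 < s) :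
    HasDerivAt (fun s : ℝ => Real.log (1 + s + Real.sqrt (s ^ 2 + 2 * s)))
      (1 / Real.sqrt (s ^ 2 + 2 * s)) s := by
  have hpos : 0 < s ^ 2 + 2 * s := by positivity
  have hr : 0 < Real.sqrt (s ^ 2 + 2 * s) := Real.sqrt_pos.mpr hpos
  have h1 : HasDerivAt (fun s : ℝ => s ^ 2 + 2 * s) (2 * s + 2) s := by
    simpa using (hasDerivAt_pow 2 s).fun_add ((hasDerivAt_id s).const_mul 2)
  have h2 : HasDerivAt (fun s : ℝ => 1 + s + Real.sqrt (s ^ 2 + 2 * s))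
      (1 + (2 * s + 2) / (2 * Real.sqrt (s ^ 2 + 2 * s))) s :=
    ((hasDerivAt_id s).const_add 1).add (h1.sqrt hpos.ne')
  have hne : 1 + s + Real.sqrt (s ^ 2 + 2 * s) ≠ 0 := by positivity
  refine (h2.log hne).congr_deriv ?_
  field_simp
  ring

lemma sin_half_pos {θ : ℝ} (hθ : θ ∈ Set.Ioo 0 (2 * Real.pi)) : 0 < Real.sin (θ / 2) :=
  Real.sin_pos_of_pos_of_lt_pi (by linarith [hθ.1]) (by linarith [hθ.2])

lemma logAbsZeta_eq {θ : ℝ} (hθ : θ ∈ Set.Ioo 0 (2 * Real.pi)) :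
    logAbsZeta θ = Real.log (1 + 2 * Real.sin (θ / 2) +
      Real.sqrt ((2 * Real.sin (θ / 2)) ^ 2 + 2 * (2 * Real.sin (θ / 2)))) := by
  have hs := sin_half_pos hθ
  have hc : 2 - 2 * Real.cos θ = (2 * Real.sin (θ / 2)) ^ 2 := by
    have h := Real.cos_two_mul (θ / 2)
    rw [mul_div_cancel₀ θ two_ne_zero] at h
    rw [h, mul_pow, Real.sin_sq]
    ring
  rw [logAbsZeta, hc, Real.sqrt_sq (by positivity)]

lemma hasDerivAt_two_mul_sin_half (θ : ℝ) :
    HasDerivAt (fun t : ℝ => 2 * Real.sin (t / 2)) (Real.cos (θ / 2)) θ := by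
  refine ((((hasDerivAt_id θ).div_const 2).sin).const_mul 2).congr_deriv ?_
  simp only [id]
  ring

lemma hasDerivAt_logAbsZeta {θ : ℝ} (hθ : θ ∈ Set.Ioo 0 (2 * Real.pi)) :
    HasDerivAt logAbsZeta (Real.cos (θ / 2) /
      Real.sqrt ((2 * Real.sin (θ / 2)) ^ 2 + 2 * (2 * Real.sin (θ / 2)))) θ := by
  have hs : 0 < 2 * Real.sin (θ / 2) := by linarith [sin_half_pos hθ]
  have h := (hasDerivAt_log_add_sqrt hs).comp θ (hasDerivAt_two_mul_sin_half θ)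
  rw [one_div_mul_eq_div] at h
  refine h.congr_of_eventuallyEq ?_
  filter_upwards [isOpen_Ioo.mem_nhds hθ] with t ht using logAbsZeta_eq ht

lemma hasDerivAt_deriv_logAbsZeta_pi :
    HasDerivAt (deriv logAbsZeta) (-Real.sqrt 2 / 8) Real.pi := by
  have hmem : Real.pi ∈ Set.Ioo 0 (2 * Real.pi) := ⟨Real.pi_pos, by linarith [Real.pi_pos]⟩
  have hnum : HasDerivAt (fun t : ℝ => Real.cos (t / 2)) (-(1 / 2)) Real.pi := by
    simpa using ((hasDerivAt_id Real.pi).div_const 2).cos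
  have hs := hasDerivAt_two_mul_sin_half Real.pi
  have hden := ((hs.fun_pow 2).fun_add (hs.const_mul 2)).sqrt (by simp; norm_num)
  have h8 : Real.sqrt 8 = 2 * Real.sqrt 2 := by
    rw [show (8 : ℝ) = 2 ^ 2 * 2 by norm_num, Real.sqrt_mul (by norm_num),
      Real.sqrt_sq (by norm_num)]
  have h2 : Real.sqrt 2 ^ 2 = 2 := Real.sq_sqrt (by norm_num)
  have hquot := hnum.fun_div hden (by simp; norm_num)
  have heq : deriv logAbsZeta =ᶠ[nhds Real.pi] fun t => Real.cos (t / 2) /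
      Real.sqrt ((2 * Real.sin (t / 2)) ^ 2 + 2 * (2 * Real.sin (t / 2))) := by
    filter_upwards [isOpen_Ioo.mem_nhds hmem] with t ht using (hasDerivAt_logAbsZeta ht).deriv
  refine (hquot.congr_of_eventuallyEq heq).congr_deriv ?_
  simp only [Real.sin_pi_div_two, Real.cos_pi_div_two]
  norm_num [h8]
  field_simp
  nlinarith [h2]

/-- `f` is twice differentiable at `θ = π` and `f''(π) = -√2/8`. -/
theorem second_deriv_logAbsZeta_at_pi :
    (∀ᶠ θ in nhds Real.pi, DifferentiableAt ℝ logAbsZeta θ) ∧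
    DifferentiableAt ℝ (deriv logAbsZeta) Real.pi ∧
    deriv (deriv logAbsZeta) Real.pi = -Real.sqrt 2 / 8 := by
  refine ⟨?_, hasDerivAt_deriv_logAbsZeta_pi.differentiableAt,
    hasDerivAt_deriv_logAbsZeta_pi.deriv⟩
  have hmem : Real.pi ∈ Set.Ioo 0 (2 * Real.pi) := ⟨Real.pi_pos, by linarith [Real.pi_pos]⟩
  filter_upwards [isOpen_Ioo.mem_nhds hmem] with θ hθ
    using (hasDerivAt_logAbsZeta hθ).differentiableAt
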